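/- If a homothetic copy λK₁ + u (λ > 0, u ∈ ℝ³) contains the centres of three distinct facets of K₁, then λ ≥ 2/3. -/

import Mathlib

open Pointwise

/-- The unit cross-polytope in ℝ³. -/
def K1 : Set (Fin 3 → ℝ) := {x | |x 0| + |x 1| + |x 2| ≤ 1}

/-- The facet of `K1` determined by a sign vector `e` (each `e i` being `1` or `-1`). -/
def K1Facet (e : Fin 3 → ℝ) : Set (Fin 3 → ℝ) :=
  convexHull ℝ {![e 0, 0, 0], ![0, e 1, 0], ![0, 0, e 2]}

/-- The centre (centroid) of the facet determined by the sign vector `e`. -/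
noncomputable def K1FacetCentre (e : Fin 3 → ℝ) : Fin 3 → ℝ :=
  (1 / 3 : ℝ) • (![e 0, 0, 0] + ![0, e 1, 0] + ![0, 0, e 2])

/-- Two points of `u + lam • K1` have `ℓ¹`-distance at most `2 * lam`. -/
theorem abs_sub_sum_le_of_mem_homothet {lam : ℝ} (hlam : 0 < lam) {u x y : Fin 3 → ℝ}
    (hx : x ∈ u +ᵥ lam • K1) (hy : y ∈ u +ᵥ lam • K1) :
    |x 0 - y 0| + |x 1 - y 1| + |x 2 - y 2| ≤ 2 * lam := by
  obtain ⟨_, ⟨a, ha, rfl⟩, rfl⟩ := hx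
  obtain ⟨_, ⟨b, hb, rfl⟩, rfl⟩ := hy
  have hab : ∀ i, |(u +ᵥ lam • a) i - (u +ᵥ lam • b) i| ≤ lam * (|a i| + |b i|) := by
    intro i
    have h : (u +ᵥ lam • a) i - (u +ᵥ lam • b) i = lam * (a i - b i) := by
      simp only [vadd_eq_add, Pi.add_apply, Pi.smul_apply, smul_eq_mul]
      ring
    rw [h, abs_mul, abs_of_pos hlam]
    exact mul_le_mul_of_nonneg_left (abs_sub _ _) hlam.le
  have ha' : |a 0| + |a 1| + |a 2| ≤ 1 := ha
  have hb' : |b 0| + |b 1| + |b 2| ≤ 1 := hb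
  calc
    _ ≤ lam * (|a 0| + |b 0|) + lam * (|a 1| + |b 1|) + lam * (|a 2| + |b 2|) :=
      add_le_add_three (hab 0) (hab 1) (hab 2)
    _ = lam * ((|a 0| + |a 1| + |a 2|) + (|b 0| + |b 1| + |b 2|)) := by ring
    _ ≤ lam * (1 + 1) := mul_le_mul_of_nonneg_left (add_le_add ha' hb') hlam.le
    _ = 2 * lam := by ring

theorem K1FacetCentre_apply (e : Fin 3 → ℝ) (i : Fin 3) : K1FacetCentre e i = e i / 3 := by
  fin_cases i <;> simp [K1FacetCentre] <;> ring

/-- Distinct sign vectors at `ℓ¹`-distance less than `4` differ in exactly one coordinate,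
so their coordinate products are opposite. -/
theorem sign_prod_eq_neg_of_abs_sub_sum_lt {e f : Fin 3 → ℝ}
    (he : ∀ i, e i = 1 ∨ e i = -1) (hf : ∀ i, f i = 1 ∨ f i = -1) (hne : e ≠ f)
    (h : |e 0 - f 0| + |e 1 - f 1| + |e 2 - f 2| < 4) :
    e 0 * e 1 * e 2 = -(f 0 * f 1 * f 2) := by
  have hne' : ¬(e 0 = f 0 ∧ e 1 = f 1 ∧ e 2 = f 2) := by
    rintro ⟨h0, h1, h2⟩
    refine hne (funext fun i => ?_)
    fin_cases i <;> assumption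
  rcases he 0 with e0 | e0 <;> rcases he 1 with e1 | e1 <;> rcases he 2 with e2 | e2 <;>
    rcases hf 0 with f0 | f0 <;> rcases hf 1 with f1 | f1 <;> rcases hf 2 with f2 | f2 <;>
    rw [e0, e1, e2, f0, f1, f2] at h hne' ⊢ <;> revert h hne' <;> norm_num

/-- If `lam < 2 / 3`, two distinct facets with centres in `u + lam • K1` have sign vectors
with opposite coordinate products. -/
theorem sign_prod_eq_neg_of_centres_mem {e f : Fin 3 → ℝ}
    (he : ∀ i, e i = 1 ∨ e i = -1) (hf : ∀ i, f i = 1 ∨ f i = -1)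
    (hne : K1Facet e ≠ K1Facet f) {lam : ℝ} (hlam : 0 < lam) (hlt : lam < 2 / 3)
    {u : Fin 3 → ℝ} (hce : K1FacetCentre e ∈ u +ᵥ lam • K1)
    (hcf : K1FacetCentre f ∈ u +ᵥ lam • K1) :
    e 0 * e 1 * e 2 = -(f 0 * f 1 * f 2) := by
  refine sign_prod_eq_neg_of_abs_sub_sum_lt he hf (fun h => hne (h ▸ rfl)) ?_
  have h := abs_sub_sum_le_of_mem_homothet hlam hce hcf
  simp only [K1FacetCentre_apply, ← sub_div, abs_div, abs_of_pos (three_pos : (0 : ℝ) < 3)] at h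
  linarith

/-- If `λ • K1 + u` contains the centres of three distinct facets of `K1`, then `λ ≥ 2/3`. -/
theorem ratio_ge_two_thirds_of_three_centres
    (e₁ e₂ e₃ : Fin 3 → ℝ)
    (he₁ : ∀ i, e₁ i = 1 ∨ e₁ i = -1) (he₂ : ∀ i, e₂ i = 1 ∨ e₂ i = -1)
    (he₃ : ∀ i, e₃ i = 1 ∨ e₃ i = -1)
    (hne₁₂ : K1Facet e₁ ≠ K1Facet e₂) (hne₁₃ : K1Facet e₁ ≠ K1Facet e₃)
    (hne₂₃ : K1Facet e₂ ≠ K1Facet e₃)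
    (lam : ℝ) (hlam : 0 < lam) (u : Fin 3 → ℝ)
    (hc₁ : K1FacetCentre e₁ ∈ u +ᵥ lam • K1)
    (hc₂ : K1FacetCentre e₂ ∈ u +ᵥ lam • K1)
    (hc₃ : K1FacetCentre e₃ ∈ u +ᵥ lam • K1) :
    2 / 3 ≤ lam := by
  by_contra! hlt
  have h₁₂ := sign_prod_eq_neg_of_centres_mem he₁ he₂ hne₁₂ hlam hlt hc₁ hc₂
  have h₁₃ := sign_prod_eq_neg_of_centres_mem he₁ he₃ hne₁₃ hlam hlt hc₁ hc₃
  have h₂₃ := sign_prod_eq_neg_of_centres_mem he₂ he₃ hne₂₃ hlam hlt hc₂ hc₃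
  have hzero : e₁ 0 * e₁ 1 * e₁ 2 = 0 := by linarith
  have hnz : ∀ i, e₁ i ≠ 0 := fun i => by rcases he₁ i with h | h <;> rw [h] <;> norm_num
  exact mul_ne_zero (mul_ne_zero (hnz 0) (hnz 1)) (hnz 2) hzero
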